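/- Let q = 3 and let c ∈ [3] be an arbitrary colour. When d = 2, for every β ∈ (0,1) there exists n₀ such that for all n ≥ n₀ and all boundary configurations τ:Λ_{2,n}→[3], 459/2000 ≤ Pr_{𝕋_{2,n}}[σ(v_{2,n}) = c ∣ σ(Λ_{2,n}) = τ] ≤ 1107/2500. When d ≥ 3, for every β ∈ [1 − 3/(d+1), 1), there exist sequences {L_n} and {U_n} (depending on d and β) and n₀ such that for all n ≥ n₀ and all τ:Λ_{d,n}→[3], L_n ≤ Pr_{𝕋_{d,n}}[σ(v_{d,n}) = c ∣ σ(Λ_{d,n}) = τ] ≤ U_n and U_n/L_n ≤ 53/27. -/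

import Mathlib

open Filter

/-- Weight of a configuration of the `q`-state Potts model with parameter `β`
on the `d`-ary tree of height `n`.  A vertex of the tree is a pair of a depth
`k ≤ n` and a path of length `k`; the parent of a vertex of depth `k+1` is
obtained by dropping the last step of its path.  The weight is
`β ^ (number of monochromatic edges)`. -/
noncomputable def treeWeight (q d n : ℕ) (β : ℝ)
    (σ : (Σ k : Fin (n + 1), (Fin k → Fin d)) → Fin q) : ℝ :=
  β ^ (Finset.univ.filter (fun p : Σ k : Fin n, (Fin (k + 1) → Fin d) =>
        σ ⟨p.1.succ, p.2⟩ = σ ⟨p.1.castSucc, fun i => p.2 i.castSucc⟩)).card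

/-- The conditional probability, under the Gibbs distribution of the `q`-state
Potts model with parameter `β` on the `d`-ary tree `𝕋_{d,n}` of height `n`,
that the root receives colour `c` given that the leaves (the depth-`n`
vertices) are coloured according to `τ`. -/
noncomputable def condRootProb (q d n : ℕ) (β : ℝ)
    (τ : (Fin n → Fin d) → Fin q) (c : Fin q) : ℝ :=
  (∑ σ ∈ Finset.univ.filter
      (fun σ : (Σ k : Fin (n + 1), (Fin k → Fin d)) → Fin q =>
        σ ⟨⟨0, n.succ_pos⟩, Fin.elim0⟩ = c ∧
          ∀ f : Fin n → Fin d, σ ⟨⟨n, n.lt_succ_self⟩, f⟩ = τ f),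
      treeWeight q d n β σ) /
  (∑ σ ∈ Finset.univ.filter
      (fun σ : (Σ k : Fin (n + 1), (Fin k → Fin d)) → Fin q =>
        ∀ f : Fin n → Fin d, σ ⟨⟨n, n.lt_succ_self⟩, f⟩ = τ f),
      treeWeight q d n β σ)

/-- `γ(q,β,d,n)`: the maximum, over boundary configurations `τ` and colours
`c₁, c₂`, of the ratio of conditional root marginals. -/
noncomputable def pottsGamma (q d : ℕ) (β : ℝ) (n : ℕ) : ℝ :=
  ⨆ τ : (Fin n → Fin d) → Fin q, ⨆ c₁ : Fin q, ⨆ c₂ : Fin q,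
    condRootProb q d n β τ c₁ / condRootProb q d n β τ c₂

/-- The function `g_{c₁,c₂,β}` of the two-step recursion. -/
noncomputable def gfun (q d : ℕ) (β : ℝ) (c₁ c₂ : Fin q) (p : Fin d → Fin q → ℝ) : ℝ :=
  ∏ k : Fin d,
    (1 - ((1 - β) * (p k c₁ - p k c₂)) /
      (β * p k c₂ + ∑ c ∈ Finset.univ.erase c₂, p k c))

/-- The function `h_{c₁,c₂,β}` of the two-step recursion. -/
noncomputable def hfun (q d : ℕ) (β : ℝ) (c₁ c₂ : Fin q) (p : Fin d → Fin q → ℝ) : ℝ :=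
  1 + ((1 - β) * (1 - gfun q d β c₁ c₂ p)) /
    (β + ∑ c ∈ Finset.univ.erase c₂, gfun q d β c c₂ p)

/-- `Δ_α`: probability vectors on `q` colours whose entries are within a
factor `α` of each other. -/
def simplexAlpha (q : ℕ) (α : ℝ) : Set (Fin q → ℝ) :=
  {p | (∀ i, 0 ≤ p i) ∧ (∑ i, p i) = 1 ∧ ∀ i j, p i ≤ α * p j}

/-- `M_{α,c₁,c₂,β}`: the maximum of `h_{c₁,c₂,β}` over `Δ_α^d`. -/
noncomputable def Mval (q d : ℕ) (α β : ℝ) (c₁ c₂ : Fin q) : ℝ :=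
  sSup ((hfun q d β c₁ c₂) '' {p | ∀ k, p k ∈ simplexAlpha q α})

/-- `Ex_c(α)`: vectors with entries in `{1, α}`, whose `c`-entry is `1`
and with at least one entry equal to `α`. -/
def exSet (q : ℕ) (c : Fin q) (α : ℝ) : Set (Fin q → ℝ) :=
  {p | (∀ c', p c' = 1 ∨ p c' = α) ∧ p c = 1 ∧ ∃ c', p c' = α}

/-- The function `f_u(d,β,x,y)` from the one-step analysis. -/
noncomputable def fU (d : ℕ) (β x y : ℝ) : ℝ :=
  (1 - (1 - β) * y) ^ d /
    ((1 - (1 - β) * y) ^ d +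
      2 * (1 - (1 - β) * x) ^ ((d : ℝ) / 2) *
        (1 - (1 - β) * (1 - x - y)) ^ ((d : ℝ) / 2))

/-- The function `f_ℓ(d,β,x,y)` from the one-step analysis. -/
noncomputable def fL (d : ℕ) (β x y : ℝ) : ℝ :=
  (1 - (1 - β) * x) ^ d /
    ((1 - (1 - β) * x) ^ d + (1 - (1 - β) * y) ^ d +
      (1 - (1 - β) * (1 - x - y)) ^ d)

/-- The pair of sequences `(u_n(d,β), ℓ_n(d,β))`, defined by
`u_0 = 1`, `ℓ_0 = 0`, `u_{n+1} = f_u(d,β,u_n,ℓ_n)`, `ℓ_{n+1} = f_ℓ(d,β,u_n,ℓ_n)`. -/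
noncomputable def ulSeq (d : ℕ) (β : ℝ) : ℕ → ℝ × ℝ
  | 0 => (1, 0)
  | n + 1 =>
      (fU d β (ulSeq d β n).1 (ulSeq d β n).2,
       fL d β (ulSeq d β n).1 (ulSeq d β n).2)

/-!
The marginals of the `d` subtrees determine the marginal of the root: up to normalisation, its
`c`-th entry is `∏ k, (1 - (1 - β) * p k c)`. If the entries of the `p k` lie in `[l, u]`, then
AM–GM bounds those of the result above by `fU d β u l`, and an exchange argument bounds them below
by `fL d β u l`. Hence `ulSeq` bounds the root marginals. It is monotone in both coordinates, so it
converges to a fixed point `(u, l)`.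

The two fixed-point equations give inequalities without denominators which become weaker as `β`
decreases, so these may be used at `β = 1 - 3 / (d + 1)`. There write `u = (1 + x) / 3` and
`l = (1 - y) / 3`. For `d = 2` they are polynomial inequalities of low degree, and they bound `x`
and `y` directly. For `d ≥ 3`, in the region `26 ≤ 27 * x + 53 * y` where `53 / 27 ≤ u / l`, they
put `(x, y)` on opposite sides of a line, which is absurd. For `d ≥ 4` the line does not depend
on `d`: the lower inequality for `d` implies the one for `4`, and the upper one implies
`2 * (1 + x) ≤ (2 - x) * exp (3 / 2 * y)`.
-/

section TreeRecursion

variable {q d n : ℕ} {β : ℝ}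

/-- The `q`-colourings of the vertices of `𝕋_{d,n}`, encoded as in `treeWeight`. -/
abbrev TreeColouring (q d n : ℕ) : Type := (Σ k : Fin (n + 1), (Fin k → Fin d)) → Fin q

namespace TreeColouring

/-- The colour of the root. -/
def root (σ : TreeColouring q d n) : Fin q := σ ⟨0, Fin.elim0⟩

/-- The colouring of the leaves. -/
def leaves (σ : TreeColouring q d n) : (Fin n → Fin d) → Fin q := fun f => σ ⟨Fin.last n, f⟩

/-- The restriction of a colouring to the `i`-th subtree below the root. -/
def subtree (σ : TreeColouring q d (n + 1)) (i : Fin d) : TreeColouring q d n :=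
  fun v => σ ⟨v.1.succ, Fin.cons i v.2⟩

/-- A colouring of the tree of height `n + 1` is a colour of the root together with a colouring
of each of the `d` subtrees. -/
def equivRootSubtrees (q d n : ℕ) :
    TreeColouring q d (n + 1) ≃ Fin q × (Fin d → TreeColouring q d n) where
  toFun σ := (σ.root, σ.subtree)
  invFun x v := Fin.cases (motive := fun k => (Fin k → Fin d) → Fin q) (fun _ => x.1)
    (fun j (f : Fin (j + 1) → Fin d) => x.2 (f 0) ⟨j, Fin.tail f⟩) v.1 v.2
  left_inv σ := by
    funext ⟨k, f⟩
    induction k using Fin.cases with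
    | zero => exact congrArg (fun g : Fin 0 → Fin d => σ ⟨0, g⟩) (funext fun i => i.elim0)
    | succ j =>
      exact congrArg (fun g : Fin (j + 1) → Fin d => σ ⟨j.succ, g⟩) (Fin.cons_self_tail f)
  right_inv _ := rfl

end TreeColouring

open TreeColouring

/-- The weight of an edge whose endpoints have colours `a` and `b`. -/
noncomputable def edgeWeight (β : ℝ) (a b : Fin q) : ℝ := if a = b then β else 1

lemma treeWeight_eq_prod (β : ℝ) (σ : TreeColouring q d n) :
    treeWeight q d n β σ = ∏ k : Fin n, ∏ f : Fin (k + 1) → Fin d,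
      edgeWeight β (σ ⟨k.succ, f⟩) (σ ⟨k.castSucc, fun i => f i.castSucc⟩) := by
  unfold treeWeight edgeWeight
  rw [← Fintype.prod_sigma', Finset.prod_ite, Finset.prod_const_one, mul_one, Finset.prod_const]

lemma prod_tuple_eq_prod_cons {α M : Type*} [Fintype α] [CommMonoid M] {k : ℕ}
    (F : (Fin (k + 1) → α) → M) : ∏ f, F f = ∏ a, ∏ g : Fin k → α, F (Fin.cons a g) :=
  ((Fin.consEquiv fun _ => α).prod_comp F).symm.trans (Fintype.prod_prod_type _)

lemma cons_castSucc {α : Type*} {k : ℕ} (a : α) (g : Fin (k + 1) → α) :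
    (fun i : Fin (k + 1) => (Fin.cons a g : Fin (k + 2) → α) i.castSucc) =
      Fin.cons a fun i => g i.castSucc := by
  funext i
  cases i using Fin.cases <;> rfl

lemma treeWeight_succ (β : ℝ) (σ : TreeColouring q d (n + 1)) :
    treeWeight q d (n + 1) β σ =
      ∏ i, edgeWeight β (σ.subtree i).root σ.root * treeWeight q d n β (σ.subtree i) := by
  simp only [treeWeight_eq_prod]
  rw [Fin.prod_univ_succ, Finset.prod_mul_distrib, Finset.prod_comm]
  congr 1
  · refine (prod_tuple_eq_prod_cons _).trans (Finset.prod_congr rfl fun i _ => ?_)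
    refine (Fintype.prod_unique (ι := Fin 0 → Fin d) _).trans ?_
    exact congrArg₂ (fun g h : Fin 0 → Fin d => edgeWeight β (σ ⟨Fin.succ 0, Fin.cons i g⟩)
      (σ ⟨0, h⟩)) (Subsingleton.elim _ _) (Subsingleton.elim _ _)
  · refine Finset.prod_congr rfl fun k _ => (prod_tuple_eq_prod_cons _).trans ?_
    refine Finset.prod_congr rfl fun i _ => Finset.prod_congr rfl fun g _ => ?_
    exact congrArg (fun h : Fin (k + 1) → Fin d => edgeWeight β (σ ⟨k.succ.succ, Fin.cons i g⟩)
      (σ ⟨k.castSucc.succ, h⟩)) (cons_castSucc i g)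

/-- The partition function of `𝕋_{d,n}` with leaves coloured by `τ` and root coloured `c`. -/
noncomputable def rootPartition (β : ℝ) (τ : (Fin n → Fin d) → Fin q) (c : Fin q) : ℝ :=
  ∑ σ : TreeColouring q d n with σ.root = c ∧ σ.leaves = τ, treeWeight q d n β σ

lemma condRootProb_eq_div (β : ℝ) (τ : (Fin n → Fin d) → Fin q) (c : Fin q) :
    condRootProb q d n β τ c = rootPartition β τ c / ∑ c', rootPartition β τ c' := by
  unfold condRootProb rootPartition
  congr 1
  · exact Finset.sum_congr (Finset.filter_congr fun σ _ => and_congr_right' funext_iff.symm)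
      fun _ _ => rfl
  · rw [← Finset.sum_fiberwise _ root]
    refine Finset.sum_congr rfl fun c' _ => ?_
    rw [Finset.filter_filter]
    exact Finset.sum_congr (Finset.filter_congr fun σ _ =>
      and_comm.trans (and_congr_right' funext_iff.symm)) fun _ _ => rfl

lemma rootPartition_zero (β : ℝ) (τ : (Fin 0 → Fin d) → Fin q) :
    rootPartition β τ = Pi.single (τ Fin.elim0) 1 := by
  funext c
  have mem_iff (σ : TreeColouring q d 0) :
      σ.root = c ∧ σ.leaves = τ ↔ τ Fin.elim0 = c ∧ σ = fun _ => c := by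
    have eq_elim0 (f : Fin 0 → Fin d) : f = Fin.elim0 := Subsingleton.elim _ _
    constructor
    · rintro ⟨hroot, rfl⟩
      refine ⟨hroot, funext fun ⟨k, f⟩ => ?_⟩
      obtain rfl : k = Fin.last 0 := Subsingleton.elim (α := Fin 1) _ _
      exact (congrArg (fun g : Fin 0 → Fin d => σ ⟨0, g⟩) (eq_elim0 f)).trans hroot
    · rintro ⟨hτ, rfl⟩
      exact ⟨rfl, funext fun f => ((congrArg τ (eq_elim0 f)).trans hτ).symm⟩
  unfold rootPartition
  simp only [mem_iff, Pi.single_apply, eq_comm (a := c)]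
  split_ifs with h
  · simp [h, Finset.filter_eq', treeWeight_eq_prod]
  · simp [h]

lemma rootPartition_succ (β : ℝ) (τ : (Fin (n + 1) → Fin d) → Fin q) (c : Fin q) :
    rootPartition β τ c =
      ∏ i, ∑ c', edgeWeight β c' c * rootPartition β (fun f => τ (Fin.cons i f)) c' := by
  have child_sum (i : Fin d) :
      ∑ c', edgeWeight β c' c * rootPartition β (fun f => τ (Fin.cons i f)) c' =
        ∑ ρ : TreeColouring q d n with ρ.leaves = fun f => τ (Fin.cons i f),
          edgeWeight β ρ.root c * treeWeight q d n β ρ := by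
    rw [← Finset.sum_fiberwise _ root]
    refine Finset.sum_congr rfl fun c' _ => ?_
    unfold rootPartition
    rw [Finset.filter_filter, Finset.mul_sum]
    refine Finset.sum_congr (Finset.filter_congr fun ρ _ => and_comm) fun ρ hρ => ?_
    rw [(Finset.mem_filter.1 hρ).2.2]
  simp only [child_sum, Finset.prod_univ_sum]
  refine Finset.sum_bij' (fun σ _ => σ.subtree) (fun ρ _ => (equivRootSubtrees q d n).symm (c, ρ))
    (fun σ hσ => ?_) (fun ρ hρ => ?_) (fun σ hσ => ?_) (fun ρ _ => rfl) (fun σ hσ => ?_)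
  · simp only [Fintype.mem_piFinset, Finset.mem_filter_univ] at hσ ⊢
    exact fun i => funext fun f => congrFun hσ.2 (Fin.cons i f)
  · simp only [Fintype.mem_piFinset, Finset.mem_filter_univ] at hρ ⊢
    refine ⟨rfl, funext fun f => (congrFun (hρ (f 0)) (Fin.tail f)).trans ?_⟩
    rw [Fin.cons_self_tail]
  · rw [Equiv.symm_apply_eq]
    exact Prod.ext (Finset.mem_filter.1 hσ).2.1.symm rfl
  · rw [treeWeight_succ, (Finset.mem_filter.1 hσ).2.1]

lemma sum_edgeWeight_mul (β : ℝ) (z : Fin q → ℝ) (c : Fin q) :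
    ∑ c', edgeWeight β c' c * z c' = ∑ c', z c' - (1 - β) * z c := by
  have hterm (c' : Fin q) :
      edgeWeight β c' c * z c' = z c' - (1 - β) * if c' = c then z c' else 0 := by
    unfold edgeWeight
    split_ifs <;> ring
  simp only [hterm, Finset.sum_sub_distrib, ← Finset.mul_sum, Finset.sum_ite_eq', Finset.mem_univ,
    if_true]

lemma rootPartition_nonneg (hβ : 0 ≤ β) (τ : (Fin n → Fin d) → Fin q) (c : Fin q) :
    0 ≤ rootPartition β τ c :=
  Finset.sum_nonneg fun _ _ => pow_nonneg hβ _

lemma sum_rootPartition_pos [NeZero q] (hβ : 0 < β) (τ : (Fin n → Fin d) → Fin q) :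
    0 < ∑ c, rootPartition β τ c := by
  induction n with
  | zero => simp [rootPartition_zero]
  | succ n ih =>
    refine Finset.sum_pos (fun c _ => ?_) Finset.univ_nonempty
    rw [rootPartition_succ]
    have edgeWeight_pos (c' : Fin q) : 0 < edgeWeight β c' c := by
      unfold edgeWeight
      split_ifs <;> positivity
    refine Finset.prod_pos fun i _ => ?_
    obtain ⟨c', hc', hne⟩ := Finset.exists_ne_zero_of_sum_ne_zero (ih fun f => τ (Fin.cons i f)).ne'
    exact Finset.sum_pos'
      (fun c _ => mul_nonneg (edgeWeight_pos c).le (rootPartition_nonneg hβ.le _ c))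
      ⟨c', hc', mul_pos (edgeWeight_pos c') ((rootPartition_nonneg hβ.le _ c').lt_of_ne' hne)⟩

lemma condRootProb_mem_stdSimplex [NeZero q] (hβ : 0 < β) (τ : (Fin n → Fin d) → Fin q) :
    condRootProb q d n β τ ∈ stdSimplex ℝ (Fin q) := by
  have hZ := sum_rootPartition_pos hβ τ
  simp only [stdSimplex, Set.mem_ofPred_eq, condRootProb_eq_div, ← Finset.sum_div,
    div_self hZ.ne', and_true]
  exact fun c => div_nonneg (rootPartition_nonneg hβ.le τ c) hZ.le

/-- One step of the tree recursion: the marginal at a vertex whose children have marginals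
`p k`. -/
noncomputable def treeStep {ι κ : Type*} [Fintype ι] [Fintype κ] (β : ℝ) (p : ι → κ → ℝ)
    (c : κ) : ℝ :=
  (∏ k, (1 - (1 - β) * p k c)) / ∑ c', ∏ k, (1 - (1 - β) * p k c')

lemma condRootProb_succ [NeZero q] (hβ : 0 < β) (τ : (Fin (n + 1) → Fin d) → Fin q) :
    condRootProb q d (n + 1) β τ =
      treeStep β fun k => condRootProb q d n β fun f => τ (Fin.cons k f) := by
  have hZ (k : Fin d) := sum_rootPartition_pos hβ fun f => τ (Fin.cons k f)
  have factored (c : Fin q) : rootPartition β τ c =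
      (∏ k, ∑ c', rootPartition β (fun f => τ (Fin.cons k f)) c') *
        ∏ k, (1 - (1 - β) * condRootProb q d n β (fun f => τ (Fin.cons k f)) c) := by
    rw [rootPartition_succ, ← Finset.prod_mul_distrib]
    refine Finset.prod_congr rfl fun k _ => ?_
    rw [sum_edgeWeight_mul, condRootProb_eq_div]
    have := (hZ k).ne'
    field_simp
  funext c
  simp only [condRootProb_eq_div β τ, factored, ← Finset.mul_sum]
  exact mul_div_mul_left _ _ (Finset.prod_pos fun k _ => hZ k).ne'

end TreeRecursion

section OneStep

/-- The probability vectors on three colours with all entries in `[l, u]`. -/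
def boundedSimplex (l u : ℝ) : Set (Fin 3 → ℝ) :=
  {p | p ∈ stdSimplex ℝ (Fin 3) ∧ ∀ c, p c ∈ Set.Icc l u}

/-- The bounds `l ≤ u` are attained by probability vectors of `boundedSimplex l u`, namely
`(u, l, 1 - u - l)` and its permutations. -/
structure IsSimplexRange (l u : ℝ) : Prop where
  lower_nonneg : 0 ≤ l
  one_le : 1 ≤ 2 * u + l
  le_one : u + 2 * l ≤ 1

lemma IsSimplexRange.upper_le_one {l u : ℝ} (h : IsSimplexRange l u) : u ≤ 1 := by
  linarith [h.lower_nonneg, h.le_one]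

lemma sum_fin_three_rotate {M : Type*} [AddCommMonoid M] (z : Fin 3 → M) (c : Fin 3) :
    ∑ i, z i = z c + (z (c + 1) + z (c + 2)) := by
  rw [← Equiv.sum_comp (Equiv.addLeft c) z, Fin.sum_univ_three, add_assoc]
  simp only [Equiv.coe_addLeft, add_zero]

lemma div_add_le_div_add_iff {a b c d : ℝ} (hab : 0 < a + b) (hcd : 0 < c + d) :
    a / (a + b) ≤ c / (c + d) ↔ a * d ≤ c * b := by
  rw [div_le_div_iff₀ hab hcd, mul_add, mul_add, mul_comm c a, add_le_add_iff_left]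

lemma one_sub_mul_pos {β p : ℝ} (hβ0 : 0 < β) (hβ1 : β ≤ 1) (hp : p ≤ 1) :
    0 < 1 - (1 - β) * p := by
  nlinarith [mul_nonneg (sub_nonneg.2 hβ1) (sub_nonneg.2 hp)]

lemma sqrt_factor_mul_le {t l u a b e : ℝ} (ht : 0 ≤ t) (htu : t * u ≤ 1) (hla : l ≤ a)
    (hau : a ≤ u) (hbu : b ≤ u) (heu : e ≤ u) (hsum : a + b + e = 1) :
    √((1 - t * u) * (1 - t * (1 - u - l))) * (1 - t * a) ≤
      √((1 - t * b) * (1 - t * e)) * (1 - t * l) := by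
  have factor_nonneg {p : ℝ} (hp : p ≤ u) : 0 ≤ 1 - t * p := by nlinarith
  have hle : (1 - t * u) * (1 - t * (1 - u - l)) ≤ (1 - t * b) * (1 - t * e) :=
    calc (1 - t * u) * (1 - t * (1 - u - l))
        ≤ (1 - t * u) * (1 - t * (b + e - u)) :=
          mul_le_mul_of_nonneg_left (by nlinarith) (factor_nonneg le_rfl)
      _ = (1 - t * b) * (1 - t * e) - t ^ 2 * ((u - b) * (u - e)) := by ring
      _ ≤ (1 - t * b) * (1 - t * e) :=
          sub_le_self _ (mul_nonneg (sq_nonneg t) (mul_nonneg (by linarith) (by linarith)))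
  exact mul_le_mul (Real.sqrt_le_sqrt hle) (by nlinarith) (factor_nonneg hau) (Real.sqrt_nonneg _)

lemma fU_eq_sqrt {d : ℕ} {β l u : ℝ} (hβ0 : 0 < β) (hβ1 : β ≤ 1) (h : IsSimplexRange l u) :
    fU d β u l = (1 - (1 - β) * l) ^ d / ((1 - (1 - β) * l) ^ d +
      2 * √((1 - (1 - β) * u) * (1 - (1 - β) * (1 - u - l))) ^ d) := by
  have hU : 0 ≤ 1 - (1 - β) * u := (one_sub_mul_pos hβ0 hβ1 h.upper_le_one).le
  have hM : 0 ≤ 1 - (1 - β) * (1 - u - l) :=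
    (one_sub_mul_pos hβ0 hβ1 (by linarith [h.lower_nonneg, h.one_le])).le
  rw [fU, Real.rpow_div_two_eq_sqrt _ hU, Real.rpow_div_two_eq_sqrt _ hM, Real.rpow_natCast,
    Real.rpow_natCast, Real.sqrt_mul hU, mul_pow, mul_assoc]

theorem treeStep_le_fU {d : ℕ} {β l u : ℝ} (hβ0 : 0 < β) (hβ1 : β ≤ 1) (h : IsSimplexRange l u)
    {p : Fin d → Fin 3 → ℝ} (hp : ∀ k, p k ∈ boundedSimplex l u) (c : Fin 3) :
    treeStep β p c ≤ fU d β u l := by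
  have factor_pos (k : Fin d) (c : Fin 3) : 0 < 1 - (1 - β) * p k c :=
    one_sub_mul_pos hβ0 hβ1 (((hp k).2 c).2.trans h.upper_le_one)
  have prod_factor_pos (c : Fin 3) : 0 < ∏ k, (1 - (1 - β) * p k c) :=
    Finset.prod_pos fun k _ => factor_pos k c
  have hL : 0 < 1 - (1 - β) * l :=
    one_sub_mul_pos hβ0 hβ1 (by linarith [h.lower_nonneg, h.one_le, h.le_one])
  set V := √((1 - (1 - β) * u) * (1 - (1 - β) * (1 - u - l)))
  have geom_mean_bound : V ^ d * ∏ k, (1 - (1 - β) * p k c) ≤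
      √((∏ k, (1 - (1 - β) * p k (c + 1))) * ∏ k, (1 - (1 - β) * p k (c + 2))) *
        (1 - (1 - β) * l) ^ d := by
    have child_bound (k : Fin d) : V * (1 - (1 - β) * p k c) ≤
        √((1 - (1 - β) * p k (c + 1)) * (1 - (1 - β) * p k (c + 2))) * (1 - (1 - β) * l) :=
      sqrt_factor_mul_le (by linarith)
        (by linarith [one_sub_mul_pos hβ0 hβ1 h.upper_le_one]) ((hp k).2 c).1
        ((hp k).2 c).2 ((hp k).2 _).2 ((hp k).2 _).2
        (by rw [add_assoc, ← sum_fin_three_rotate, (hp k).1.2])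
    have hprod := Finset.prod_le_prod (s := Finset.univ)
      (fun k _ => mul_nonneg (Real.sqrt_nonneg _) (factor_pos k c).le) fun k _ => child_bound k
    simpa only [Finset.prod_mul_distrib, Finset.prod_const, Finset.card_univ, Fintype.card_fin,
      ← Real.sqrt_prod _ fun k _ => (mul_pos (factor_pos k _) (factor_pos k _)).le] using hprod
  have am_gm : 2 * √((∏ k, (1 - (1 - β) * p k (c + 1))) * ∏ k, (1 - (1 - β) * p k (c + 2))) ≤
      ∏ k, (1 - (1 - β) * p k (c + 1)) + ∏ k, (1 - (1 - β) * p k (c + 2)) := by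
    rw [Real.sqrt_mul (prod_factor_pos _).le]
    simpa only [Real.sq_sqrt (prod_factor_pos _).le, mul_assoc] using two_mul_le_add_sq
      √(∏ k, (1 - (1 - β) * p k (c + 1))) √(∏ k, (1 - (1 - β) * p k (c + 2)))
  rw [fU_eq_sqrt hβ0 hβ1 h, treeStep, sum_fin_three_rotate _ c, div_add_le_div_add_iff
    (add_pos (prod_factor_pos _) (add_pos (prod_factor_pos _) (prod_factor_pos _)))
    (by positivity)]
  nlinarith [mul_le_mul_of_nonneg_right am_gm (pow_pos hL d).le]

theorem IsSimplexRange.fU_mono {d : ℕ} {β l u l' u' : ℝ} (hβ0 : 0 < β) (hβ1 : β ≤ 1)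
    (h : IsSimplexRange l u) (h' : IsSimplexRange l' u') (hl : l ≤ l') (hu : u' ≤ u) :
    fU d β u' l' ≤ fU d β u l := by
  have hL' : 0 < 1 - (1 - β) * l' :=
    one_sub_mul_pos hβ0 hβ1 (by linarith [h'.lower_nonneg, h'.one_le, h'.le_one])
  have hL : 0 < 1 - (1 - β) * l :=
    one_sub_mul_pos hβ0 hβ1 (by linarith [h.lower_nonneg, h.one_le, h.le_one])
  have factor_bound := sqrt_factor_mul_le (sub_nonneg.2 hβ1)
    (by linarith [one_sub_mul_pos hβ0 hβ1 h.upper_le_one]) hl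
    (by linarith [h'.one_le, h'.le_one]) hu (e := 1 - u' - l') (by linarith [h'.one_le]) (by ring)
  rw [fU_eq_sqrt hβ0 hβ1 h, fU_eq_sqrt hβ0 hβ1 h',
    div_add_le_div_add_iff (by positivity) (by positivity)]
  have := pow_le_pow_left₀ (mul_nonneg (Real.sqrt_nonneg _) hL'.le) factor_bound d
  rw [mul_pow, mul_pow] at this
  linarith

lemma mul_add_mul_le_of_sum_le {x y X Y R S M N : ℝ} (hS : 0 ≤ S) (hSR : S ≤ R) (hx : x ≤ R)
    (hxy : x + y ≤ R + S) (hY : 0 ≤ Y) (hYX : Y ≤ X) (hXM : X ≤ M) (hXY : X + Y ≤ M + N) :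
    x * X + y * Y ≤ R * M + S * N :=
  calc x * X + y * Y = x * (X - Y) + (x + y) * Y := by ring
    _ ≤ R * (X - Y) + (R + S) * Y :=
      add_le_add (mul_le_mul_of_nonneg_right hx (sub_nonneg.2 hYX))
        (mul_le_mul_of_nonneg_right hxy hY)
    _ = (R - S) * X + S * (X + Y) := by ring
    _ ≤ (R - S) * M + S * (M + N) :=
      add_le_add (mul_le_mul_of_nonneg_left hXM (sub_nonneg.2 hSR))
        (mul_le_mul_of_nonneg_left hXY hS)
    _ = R * M + S * N := by ring

lemma prod_add_prod_le_pow_add_pow {ι : Type*} (s : Finset ι) {r w : ι → ℝ} {R S : ℝ}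
    (hr : ∀ i, r i ∈ Set.Icc 0 R) (hw : ∀ i, w i ∈ Set.Icc 0 R) (hS : 0 ≤ S) (hSR : S ≤ R)
    (hrw : ∀ i, r i + w i ≤ R + S) :
    ∏ i ∈ s, r i + ∏ i ∈ s, w i ≤ R ^ s.card + S ^ s.card := by
  classical
  have prod_le {z : ι → ℝ} (hz : ∀ i, z i ∈ Set.Icc 0 R) (s : Finset ι) :
      ∏ i ∈ s, z i ≤ R ^ s.card :=
    (Finset.prod_le_prod (fun i _ => (hz i).1) fun i _ => (hz i).2).trans_eq (Finset.prod_const R)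
  have prod_nonneg {z : ι → ℝ} (hz : ∀ i, z i ∈ Set.Icc 0 R) (s : Finset ι) : 0 ≤ ∏ i ∈ s, z i :=
    Finset.prod_nonneg fun i _ => (hz i).1
  induction s using Finset.induction_on with
  | empty => simp
  | insert a s ha ih =>
    rw [Finset.prod_insert ha, Finset.prod_insert ha, Finset.card_insert_of_notMem ha, pow_succ',
      pow_succ']
    rcases le_total (∏ i ∈ s, w i) (∏ i ∈ s, r i) with hle | hle
    · exact mul_add_mul_le_of_sum_le hS hSR (hr a).2 (hrw a) (prod_nonneg hw s) hle
        (prod_le hr s) ih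
    · rw [add_comm]
      exact mul_add_mul_le_of_sum_le hS hSR (hw a).2 ((add_comm _ _).trans_le (hrw a))
        (prod_nonneg hr s) hle (prod_le hw s) ((add_comm _ _).trans_le ih)

lemma factor_ratio_add_le {β l u : ℝ} (hβ0 : 0 < β) (hβ1 : β ≤ 1) (hu : u ≤ 1)
    {p : Fin 3 → ℝ} (hp : p ∈ boundedSimplex l u) (c : Fin 3) :
    (1 - (1 - β) * p (c + 1)) / (1 - (1 - β) * p c) +
        (1 - (1 - β) * p (c + 2)) / (1 - (1 - β) * p c) ≤
      (1 - (1 - β) * l) / (1 - (1 - β) * u) +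
        (1 - (1 - β) * (1 - u - l)) / (1 - (1 - β) * u) := by
  have hsum : p (c + 2) = 1 - p c - p (c + 1) := by
    linarith [hp.1.2, sum_fin_three_rotate p c]
  rw [← add_div, ← add_div, div_le_div_iff₀ (one_sub_mul_pos hβ0 hβ1 ((hp.2 c).2.trans hu))
    (one_sub_mul_pos hβ0 hβ1 hu), hsum]
  nlinarith [mul_nonneg (mul_nonneg (sub_nonneg.2 hβ1) (sub_nonneg.2 (hp.2 c).2))
    (by linarith : 0 ≤ 2 + β)]

theorem fL_le_treeStep {d : ℕ} {β l u : ℝ} (hβ0 : 0 < β) (hβ1 : β ≤ 1) (h : IsSimplexRange l u)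
    {p : Fin d → Fin 3 → ℝ} (hp : ∀ k, p k ∈ boundedSimplex l u) (c : Fin 3) :
    fL d β u l ≤ treeStep β p c := by
  have factor_pos (k : Fin d) (c : Fin 3) : 0 < 1 - (1 - β) * p k c :=
    one_sub_mul_pos hβ0 hβ1 (((hp k).2 c).2.trans h.upper_le_one)
  have prod_factor_pos (c : Fin 3) : 0 < ∏ k, (1 - (1 - β) * p k c) :=
    Finset.prod_pos fun k _ => factor_pos k c
  have hU : 0 < 1 - (1 - β) * u := one_sub_mul_pos hβ0 hβ1 h.upper_le_one
  have hM : 0 < 1 - (1 - β) * (1 - u - l) :=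
    one_sub_mul_pos hβ0 hβ1 (by linarith [h.lower_nonneg, h.one_le])
  have hML : 1 - (1 - β) * (1 - u - l) ≤ 1 - (1 - β) * l := by nlinarith [h.le_one]
  have ratio_mem (k : Fin d) (c' : Fin 3) : (1 - (1 - β) * p k c') / (1 - (1 - β) * p k c) ∈
      Set.Icc 0 ((1 - (1 - β) * l) / (1 - (1 - β) * u)) := by
    refine ⟨(div_pos (factor_pos k c') (factor_pos k c)).le, ?_⟩
    have := ((hp k).2 c').1
    have := ((hp k).2 c).2
    exact div_le_div₀ (hM.le.trans hML) (by nlinarith) hU (by nlinarith)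
  have prod_ratio_bound := prod_add_prod_le_pow_add_pow Finset.univ (fun k => ratio_mem k (c + 1))
    (fun k => ratio_mem k (c + 2)) (by positivity) (div_le_div_of_nonneg_right hML hU.le)
    fun k => factor_ratio_add_le hβ0 hβ1 h.upper_le_one (hp k) c
  simp only [Finset.prod_div_distrib, Finset.card_univ, Fintype.card_fin, div_pow, ← add_div]
    at prod_ratio_bound
  rw [div_le_div_iff₀ (prod_factor_pos c) (pow_pos hU d)] at prod_ratio_bound
  rw [fL, treeStep, sum_fin_three_rotate _ c, add_assoc, div_add_le_div_add_iff]
  · linarith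
  · have := hM.trans_le hML
    positivity
  · exact add_pos (prod_factor_pos _) (add_pos (prod_factor_pos _) (prod_factor_pos _))

theorem treeStep_mem_boundedSimplex {d : ℕ} {β l u : ℝ} (hβ0 : 0 < β) (hβ1 : β ≤ 1)
    (h : IsSimplexRange l u) {p : Fin d → Fin 3 → ℝ} (hp : ∀ k, p k ∈ boundedSimplex l u) :
    treeStep β p ∈ boundedSimplex (fL d β u l) (fU d β u l) := by
  have prod_factor_pos (c : Fin 3) : 0 < ∏ k, (1 - (1 - β) * p k c) :=
    Finset.prod_pos fun k _ =>
      one_sub_mul_pos hβ0 hβ1 (((hp k).2 c).2.trans h.upper_le_one)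
  have hsum : 0 < ∑ c, ∏ k, (1 - (1 - β) * p k c) :=
    Finset.sum_pos (fun c _ => prod_factor_pos c) Finset.univ_nonempty
  refine ⟨⟨fun c => (div_pos (prod_factor_pos c) hsum).le, ?_⟩,
    fun c => ⟨fL_le_treeStep hβ0 hβ1 h hp c, treeStep_le_fU hβ0 hβ1 h hp c⟩⟩
  simp only [treeStep, ← Finset.sum_div]
  exact div_self hsum.ne'

lemma IsSimplexRange.extremal_mem {l u : ℝ} (h : IsSimplexRange l u) :
    ![u, l, 1 - u - l] ∈ boundedSimplex l u := by
  have hlu : l ≤ u := by linarith [h.one_le, h.le_one]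
  have mem_Icc (c : Fin 3) : ![u, l, 1 - u - l] c ∈ Set.Icc l u := by
    fin_cases c
    exacts [⟨hlu, le_rfl⟩, ⟨le_rfl, hlu⟩, ⟨le_sub_iff_add_le.2 (by linarith [h.le_one]),
      sub_le_iff_le_add.2 (by linarith [h.one_le])⟩]
  exact ⟨⟨fun c => h.lower_nonneg.trans (mem_Icc c).1, by simp [Fin.sum_univ_three]⟩, mem_Icc⟩

lemma treeStep_extremal (d : ℕ) (β l u : ℝ) :
    treeStep β (fun _ : Fin d => ![u, l, 1 - u - l]) 0 = fL d β u l := by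
  simp [treeStep, fL, Fin.sum_univ_three]

theorem IsSimplexRange.fL_mono {d : ℕ} {β l u l' u' : ℝ} (hβ0 : 0 < β) (hβ1 : β ≤ 1)
    (h : IsSimplexRange l u) (h' : IsSimplexRange l' u') (hl : l ≤ l') (hu : u' ≤ u) :
    fL d β u l ≤ fL d β u' l' := by
  rw [← treeStep_extremal d β l' u']
  exact fL_le_treeStep hβ0 hβ1 h (fun _ => ⟨h'.extremal_mem.1, fun c =>
    ⟨hl.trans (h'.extremal_mem.2 c).1, (h'.extremal_mem.2 c).2.trans hu⟩⟩) 0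

theorem IsSimplexRange.step {d : ℕ} {β l u : ℝ} (hβ0 : 0 < β) (hβ1 : β ≤ 1)
    (h : IsSimplexRange l u) : IsSimplexRange (fL d β u l) (fU d β u l) := by
  have hstep := treeStep_mem_boundedSimplex (d := d) hβ0 hβ1 h fun _ => h.extremal_mem
  have attained := treeStep_extremal d β l u
  refine ⟨attained ▸ hstep.1.1 0, ?_, ?_⟩
  · have hsum := hstep.1.2
    rw [Fin.sum_univ_three, attained] at hsum
    linarith [(hstep.2 1).2, (hstep.2 2).2]
  have hU : 0 < 1 - (1 - β) * u := one_sub_mul_pos hβ0 hβ1 h.upper_le_one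
  have hUM : 1 - (1 - β) * u ≤ 1 - (1 - β) * (1 - u - l) := by nlinarith [h.one_le]
  have hUL : 1 - (1 - β) * u ≤ 1 - (1 - β) * l := by nlinarith [h.one_le, h.le_one]
  have hV : 1 - (1 - β) * u ≤ √((1 - (1 - β) * u) * (1 - (1 - β) * (1 - u - l))) :=
    Real.le_sqrt_of_sq_le (by nlinarith)
  have hUd := pow_pos hU d
  have hLd := pow_pos (hU.trans_le hUL) d
  rw [fU_eq_sqrt hβ0 hβ1 h, fL]
  set A := (1 - (1 - β) * u) ^ d
  set B := (1 - (1 - β) * l) ^ d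
  set C := (1 - (1 - β) * (1 - u - l)) ^ d
  have hAC : A ≤ C := pow_le_pow_left₀ hU.le hUM d
  have hAV := pow_le_pow_left₀ hU.le hV d
  calc B / (B + 2 * √((1 - (1 - β) * u) * (1 - (1 - β) * (1 - u - l))) ^ d) + 2 * (A / (A + B + C))
      ≤ B / (B + 2 * A) + 2 * (A / (A + B + A)) := by gcongr
    _ = 1 := by
      field_simp
      ring

end OneStep

section Sequences

open scoped Topology

variable {d : ℕ} {β : ℝ}

lemma isSimplexRange_ulSeq (hβ0 : 0 < β) (hβ1 : β ≤ 1) (n : ℕ) :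
    IsSimplexRange (ulSeq d β n).2 (ulSeq d β n).1 := by
  induction n with
  | zero => exact ⟨le_rfl, by norm_num [ulSeq], by norm_num [ulSeq]⟩
  | succ n ih => exact ih.step hβ0 hβ1

theorem condRootProb_mem_boundedSimplex (hβ0 : 0 < β) (hβ1 : β ≤ 1) {n : ℕ}
    (τ : (Fin n → Fin d) → Fin 3) :
    condRootProb 3 d n β τ ∈ boundedSimplex (ulSeq d β n).2 (ulSeq d β n).1 := by
  induction n with
  | zero =>
    have hmem := condRootProb_mem_stdSimplex hβ0 τ
    exact ⟨hmem, mem_Icc_of_mem_stdSimplex hmem⟩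
  | succ n ih =>
    rw [condRootProb_succ hβ0]
    exact treeStep_mem_boundedSimplex hβ0 hβ1 (isSimplexRange_ulSeq hβ0 hβ1 n) fun _ => ih _

lemma ulSeq_succ_le (hβ0 : 0 < β) (hβ1 : β ≤ 1) (n : ℕ) :
    (ulSeq d β (n + 1)).1 ≤ (ulSeq d β n).1 ∧ (ulSeq d β n).2 ≤ (ulSeq d β (n + 1)).2 := by
  have hrange := isSimplexRange_ulSeq (d := d) hβ0 hβ1
  induction n with
  | zero => exact ⟨(hrange 1).upper_le_one, (hrange 1).lower_nonneg⟩
  | succ n ih =>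
    exact ⟨(hrange n).fU_mono hβ0 hβ1 (hrange (n + 1)) ih.2 ih.1,
      (hrange n).fL_mono hβ0 hβ1 (hrange (n + 1)) ih.2 ih.1⟩

/-- `(u, l)` is a fixed point of the one-step recursion `(fU, fL)` lying in the domain of
`ulSeq`. -/
structure IsFixedRange (d : ℕ) (β l u : ℝ) : Prop extends IsSimplexRange l u where
  upper_eq : fU d β u l = u
  lower_eq : fL d β u l = l

lemma continuousAt_fU_fL (hβ0 : 0 < β) (hβ1 : β ≤ 1) {l u : ℝ} (h : IsSimplexRange l u) :
    ContinuousAt (fun v : ℝ × ℝ => (fU d β v.1 v.2, fL d β v.1 v.2)) (u, l) := by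
  have hU : 0 < 1 - (1 - β) * u := one_sub_mul_pos hβ0 hβ1 h.upper_le_one
  have hL : 0 < 1 - (1 - β) * l :=
    one_sub_mul_pos hβ0 hβ1 (by linarith [h.lower_nonneg, h.one_le, h.le_one])
  have hM : 0 < 1 - (1 - β) * (1 - u - l) :=
    one_sub_mul_pos hβ0 hβ1 (by linarith [h.lower_nonneg, h.one_le])
  unfold fU fL
  refine ContinuousAt.prodMk (ContinuousAt.div ?_ ?_ (by positivity))
    (ContinuousAt.div ?_ ?_ (by positivity))
  all_goals fun_prop (disch := positivity)

theorem exists_tendsto_ulSeq (hβ0 : 0 < β) (hβ1 : β ≤ 1) :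
    ∃ l u, Tendsto (ulSeq d β) atTop (𝓝 (u, l)) ∧ IsFixedRange d β l u := by
  have hrange := isSimplexRange_ulSeq (d := d) hβ0 hβ1
  have upper_bddBelow : BddBelow (Set.range fun n => (ulSeq d β n).1) :=
    ⟨0, Set.forall_mem_range.2 fun n => by linarith [(hrange n).one_le, (hrange n).le_one]⟩
  have lower_bddAbove : BddAbove (Set.range fun n => (ulSeq d β n).2) :=
    ⟨1, Set.forall_mem_range.2 fun n => by linarith [(hrange n).one_le, (hrange n).le_one]⟩
  have hu := tendsto_atTop_ciInf
    (antitone_nat_of_succ_le fun n => (ulSeq_succ_le hβ0 hβ1 n).1) upper_bddBelow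
  have hl := tendsto_atTop_ciSup
    (monotone_nat_of_le_succ fun n => (ulSeq_succ_le hβ0 hβ1 n).2) lower_bddAbove
  set u := ⨅ n, (ulSeq d β n).1
  set l := ⨆ n, (ulSeq d β n).2
  have hlim : Tendsto (ulSeq d β) atTop (𝓝 (u, l)) := hu.prodMk_nhds hl
  have hrange_lim : IsSimplexRange l u :=
    ⟨ge_of_tendsto' hl fun n => (hrange n).lower_nonneg,
      ge_of_tendsto' ((hu.const_mul 2).add hl) fun n => (hrange n).one_le,
      le_of_tendsto' (hu.add (hl.const_mul 2)) fun n => (hrange n).le_one⟩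
  have fixed : (fU d β u l, fL d β u l) = (u, l) := tendsto_nhds_unique
    ((continuousAt_fU_fL hβ0 hβ1 hrange_lim).tendsto.comp hlim)
    ((tendsto_add_atTop_iff_nat 1).2 hlim)
  exact ⟨l, u, hlim, hrange_lim, (Prod.ext_iff.1 fixed).1, (Prod.ext_iff.1 fixed).2⟩

end Sequences

section CriticalBox

/-- The inequality `u ≤ fU u l` at `β = 1 - 3 / (d + 1)`, in the coordinates `u = (1 + x) / 3` and
`l = (1 - y) / 3`. -/
def CritUpper (d : ℕ) (x y : ℝ) : Prop :=
  2 * (1 + x) * √((1 - x / d) * (1 + (x - y) / d)) ^ d ≤ (2 - x) * (1 + y / d) ^ d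

/-- The inequality `fL u l ≤ l` at `β = 1 - 3 / (d + 1)`, in the coordinates `u = (1 + x) / 3` and
`l = (1 - y) / 3`. -/
def CritLower (d : ℕ) (x y : ℝ) : Prop :=
  (2 + y) * (1 - x / d) ^ d ≤ (1 - y) * ((1 + y / d) ^ d + (1 + (x - y) / d) ^ d)

/-- The constraints on a limit `((1 + x) / 3, (1 - y) / 3)` of `ulSeq d β` that hold uniformly in
`1 - 3 / (d + 1) ≤ β`. -/
structure IsCritBox (d : ℕ) (x y : ℝ) : Prop where
  left_lt : x < 2
  right_le : y ≤ 1
  left_le : x ≤ 2 * y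
  right_le_left : y ≤ 2 * x
  upper : CritUpper d x y
  lower : CritLower d x y

lemma critical_factor_mul_le {d t a b : ℝ} (hd : 0 < d) (ht : t ≤ 3 / (d + 1)) (hab : b ≤ a) :
    (1 - a / d) * (1 - t * ((1 + b) / 3)) ≤ (1 - b / d) * (1 - t * ((1 + a) / 3)) := by
  have ht' : t * (d + 1) ≤ 3 := (le_div_iff₀ (by linarith)).1 ht
  have hdiff : (1 - b / d) * (1 - t * ((1 + a) / 3)) - (1 - a / d) * (1 - t * ((1 + b) / 3)) =
      (a - b) / d * ((3 - t * (d + 1)) / 3) := by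
    field_simp
    ring
  exact sub_nonneg.1 (hdiff ▸ mul_nonneg (div_nonneg (by linarith) hd.le) (by linarith))

lemma IsFixedRange.upper_lt_one {d : ℕ} {β l u : ℝ} (hβ0 : 0 < β) (hβ1 : β ≤ 1)
    (h : IsFixedRange d β l u) : u < 1 := by
  have hU : 0 < 1 - (1 - β) * u := one_sub_mul_pos hβ0 hβ1 h.upper_le_one
  have hL : 0 < 1 - (1 - β) * l :=
    one_sub_mul_pos hβ0 hβ1 (by linarith [h.lower_nonneg, h.one_le, h.le_one])
  have hM : 0 < 1 - (1 - β) * (1 - u - l) :=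
    one_sub_mul_pos hβ0 hβ1 (by linarith [h.lower_nonneg, h.one_le])
  rw [← h.upper_eq, fU_eq_sqrt hβ0 hβ1 h.toIsSimplexRange, div_lt_one (by positivity)]
  exact lt_add_of_pos_right _ (by positivity)

lemma mul_sqrt_pow_le_of_factors_le {d : ℕ} {a b U L M X Y Z : ℝ} (ha : 0 ≤ a) (hL : 0 < L)
    (hU : 0 ≤ U) (hY : 0 ≤ Y) (hZ : 0 ≤ Z) (hXL : X * L ≤ Y * U) (hZL : Z * L ≤ Y * M)
    (hfix : a * √(U * M) ^ d = b * L ^ d) : a * √(X * Z) ^ d ≤ b * Y ^ d := by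
  have hsqrt : √(X * Z) * L ≤ √(U * M) * Y := by
    rw [← Real.sqrt_sq hL.le, ← Real.sqrt_sq hY, ← Real.sqrt_mul' _ (sq_nonneg L),
      ← Real.sqrt_mul' _ (sq_nonneg Y)]
    exact Real.sqrt_le_sqrt (by nlinarith [mul_le_mul hXL hZL (by positivity) (by positivity)])
  refine le_of_mul_le_mul_right ?_ (pow_pos hL d)
  calc a * √(X * Z) ^ d * L ^ d = a * (√(X * Z) * L) ^ d := by ring
    _ ≤ a * (√(U * M) * Y) ^ d := by gcongr
    _ = a * √(U * M) ^ d * Y ^ d := by ring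
    _ = b * Y ^ d * L ^ d := by rw [hfix]; ring

lemma mul_pow_le_of_factors_le {d : ℕ} {a b U L M X Y Z : ℝ} (hb : 0 ≤ b) (hU : 0 < U)
    (hL : 0 ≤ L) (hM : 0 ≤ M) (hX : 0 ≤ X) (hXL : X * L ≤ Y * U) (hXM : X * M ≤ Z * U)
    (hfix : a * U ^ d = b * (L ^ d + M ^ d)) : a * X ^ d ≤ b * (Y ^ d + Z ^ d) := by
  refine le_of_mul_le_mul_right ?_ (pow_pos hU d)
  calc a * X ^ d * U ^ d = X ^ d * (a * U ^ d) := by ring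
    _ = b * ((X * L) ^ d + (X * M) ^ d) := by rw [hfix]; ring
    _ ≤ b * ((Y * U) ^ d + (Z * U) ^ d) := by gcongr
    _ = b * (Y ^ d + Z ^ d) * U ^ d := by ring

theorem IsFixedRange.isCritBox {d : ℕ} {β x y : ℝ} (hd : 2 ≤ d) (hβ0 : 0 < β) (hβ1 : β ≤ 1)
    (hβ : 1 - 3 / ((d : ℝ) + 1) ≤ β) (h : IsFixedRange d β ((1 - y) / 3) ((1 + x) / 3)) :
    IsCritBox d x y := by
  have hd2 : (2 : ℝ) ≤ d := by exact_mod_cast hd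
  have hd0 : (0 : ℝ) < d := by linarith
  have ht : 1 - β ≤ 3 / ((d : ℝ) + 1) := by linarith
  have hx : x < 2 := by linarith [h.upper_lt_one hβ0 hβ1]
  have hy : y ≤ 1 := by linarith [h.lower_nonneg]
  have hxy : x ≤ 2 * y := by linarith [h.le_one]
  have hyx : y ≤ 2 * x := by linarith [h.one_le]
  have crit_factor_nonneg {a : ℝ} (ha : a ≤ 2) : 0 ≤ 1 - a / d :=
    sub_nonneg.2 ((div_le_one hd0).2 (ha.trans hd2))
  have hU : 0 < 1 - (1 - β) * ((1 + x) / 3) := one_sub_mul_pos hβ0 hβ1 h.upper_le_one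
  have hL : 0 < 1 - (1 - β) * ((1 + -y) / 3) := one_sub_mul_pos hβ0 hβ1 (by linarith)
  have hM : 0 < 1 - (1 - β) * ((1 + (y - x)) / 3) := one_sub_mul_pos hβ0 hβ1 (by linarith)
  have upper_eq := h.upper_eq
  have lower_eq := h.lower_eq
  rw [fU_eq_sqrt hβ0 hβ1 h.toIsSimplexRange] at upper_eq
  rw [fL] at lower_eq
  have hl_coord : (1 - y) / 3 = (1 + -y) / 3 := by ring
  have hm_coord : 1 - (1 + x) / 3 - (1 - y) / 3 = (1 + (y - x)) / 3 := by ring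
  rw [hm_coord, hl_coord, div_eq_iff (by positivity)] at upper_eq lower_eq
  have factor_le {a b : ℝ} (hab : b ≤ a) := critical_factor_mul_le hd0 ht hab
  have hXL := factor_le (a := x) (b := -y) (by linarith)
  have hZL := factor_le (a := y - x) (b := -y) (by linarith)
  have hXM := factor_le (a := x) (b := y - x) (by linarith)
  have upper := mul_sqrt_pow_le_of_factors_le (a := 2 * (1 + x)) (b := 2 - x) (by linarith) hL
    hU.le (crit_factor_nonneg (by linarith)) (crit_factor_nonneg (by linarith)) hXL hZL
    (by linear_combination -3 * upper_eq)
  have lower := mul_pow_le_of_factors_le (a := 2 + y) (b := 1 - y) (by linarith) hU hL.le hM.le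
    (crit_factor_nonneg hx.le) hXL hXM (by linear_combination 3 * lower_eq)
  have hY : 1 - -y / d = 1 + y / d := by ring
  have hZ : 1 - (y - x) / d = 1 + (x - y) / d := by ring
  rw [hY, hZ] at upper lower
  exact ⟨hx, hy, hxy, hyx, upper, lower⟩

theorem exists_isCritBox {d : ℕ} {β : ℝ} (hd : 2 ≤ d) (hβ0 : 0 < β) (hβ1 : β ≤ 1)
    (hβ : 1 - 3 / ((d : ℝ) + 1) ≤ β) :
    ∃ x y, Tendsto (ulSeq d β) atTop (nhds ((1 + x) / 3, (1 - y) / 3)) ∧ IsCritBox d x y := by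
  obtain ⟨l, u, hlim, hfix⟩ := exists_tendsto_ulSeq (d := d) hβ0 hβ1
  obtain ⟨x, rfl⟩ : ∃ x, u = (1 + x) / 3 := ⟨3 * u - 1, by ring⟩
  obtain ⟨y, rfl⟩ : ∃ y, l = (1 - y) / 3 := ⟨1 - 3 * l, by ring⟩
  exact ⟨x, y, hlim, hfix.isCritBox hd hβ0 hβ1 hβ⟩

end CriticalBox

section BinaryTree

lemma IsCritBox.two_quadratic {x y : ℝ} (h : IsCritBox 2 x y) :
    2 * (x - y) * (3 + x) ≤ y ^ 2 ∧
      (1 + 2 * y) * (y ^ 2 + (x - y) ^ 2) ≤ 2 * (x - y) * (6 - 2 * y - y ^ 2) := by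
  have hx := h.left_lt
  have hy := h.right_le
  have hyx := h.right_le_left
  obtain ⟨-, -, -, -, upper, lower⟩ := h
  unfold CritUpper at upper
  unfold CritLower at lower
  push_cast at upper lower
  rw [Real.sq_sqrt (mul_nonneg (by linarith) (by linarith))] at upper
  have upper' : (2 - x) * ((1 + x) * (1 + (x - y) / 2)) ≤ (2 - x) * (1 + y / 2) ^ 2 := by
    linarith
  constructor
  · linarith [le_of_mul_le_mul_left upper' (by linarith)]
  · linarith

lemma IsCritBox.two_bounds {x y : ℝ} (h : IsCritBox 2 x y) :
    y ^ 2 + 3 * y ≤ 1 ∧ x < 821 / 2500 := by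
  obtain ⟨upper, lower⟩ := h.two_quadratic
  have hy0 : 0 ≤ y := by linarith [h.left_le, h.right_le_left]
  have hy1 := h.right_le
  have hc : 0 < 6 - 2 * y - y ^ 2 := by nlinarith
  have hxy : y ≤ x := by
    by_contra! hlt
    nlinarith [mul_nonneg hy0 (sq_nonneg y), mul_nonneg hy0 (sq_nonneg (x - y)),
      mul_pos (sub_pos.2 hlt) hc]
  have hyq : y ^ 2 + 3 * y ≤ 1 := by
    rcases hy0.eq_or_lt with rfl | hy
    · norm_num
    have hquad : y ^ 2 * ((1 + 2 * y) * (3 + y)) ≤ y ^ 2 * (6 - 2 * y - y ^ 2) :=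
      calc y ^ 2 * ((1 + 2 * y) * (3 + y))
          ≤ (1 + 2 * y) * (y ^ 2 + (x - y) ^ 2) * (3 + y) := by
            nlinarith [mul_nonneg (by positivity : 0 ≤ (1 + 2 * y) * (3 + y)) (sq_nonneg (x - y))]
        _ ≤ 2 * (x - y) * (6 - 2 * y - y ^ 2) * (3 + y) := by gcongr
        _ = 2 * (x - y) * (3 + y) * (6 - 2 * y - y ^ 2) := by ring
        _ ≤ y ^ 2 * (6 - 2 * y - y ^ 2) := by gcongr; nlinarith
    linarith [le_of_mul_le_mul_left hquad (by positivity)]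
  exact ⟨hyq, by nlinarith⟩

end BinaryTree

section LargeBranching

lemma CritUpper.mono_right {d : ℕ} {x y z : ℝ} (hx0 : 0 ≤ x) (hx2 : x ≤ 2) (hxd : x ≤ d)
    (hy : 0 ≤ y) (hyz : y ≤ z) (h : CritUpper d x y) : CritUpper d x z := by
  have hX : 0 ≤ 1 - x / d := sub_nonneg.2 (div_le_one_of_le₀ hxd d.cast_nonneg)
  have : 0 ≤ 2 - x := by linarith
  unfold CritUpper at *
  calc 2 * (1 + x) * √((1 - x / d) * (1 + (x - z) / d)) ^ d
      ≤ 2 * (1 + x) * √((1 - x / d) * (1 + (x - y) / d)) ^ d := by gcongr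
    _ ≤ (2 - x) * (1 + y / d) ^ d := h
    _ ≤ (2 - x) * (1 + z / d) ^ d := by gcongr

lemma CritLower.mono_left {d : ℕ} {x y z : ℝ} (hx : 0 ≤ x) (hzd : z ≤ d) (hy0 : 0 ≤ y)
    (hy1 : y ≤ 1) (hyd : y ≤ d) (hxz : x ≤ z) (h : CritLower d x y) : CritLower d z y := by
  have hZ : 0 ≤ 1 - z / d := sub_nonneg.2 (div_le_one_of_le₀ hzd d.cast_nonneg)
  have : 0 ≤ 1 - y := by linarith
  have hM : 0 ≤ 1 + (x - y) / d := by
    have hxd : 0 ≤ x / d := by positivity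
    have hyd' : y / d ≤ 1 := div_le_one_of_le₀ hyd d.cast_nonneg
    rw [sub_div]
    linarith
  unfold CritLower at *
  calc (2 + y) * (1 - z / d) ^ d ≤ (2 + y) * (1 - x / d) ^ d := by gcongr
    _ ≤ (1 - y) * ((1 + y / d) ^ d + (1 + (x - y) / d) ^ d) := h
    _ ≤ (1 - y) * ((1 + y / d) ^ d + (1 + (z - y) / d) ^ d) := by gcongr

-- A polynomial is nonnegative on `[a, b]` if it is a nonnegative combination of these products
-- (its Bernstein form), and `linarith` finds the coefficients.
lemma sub_pow_mul_sub_pow_nonneg {a b x : ℝ} (ha : a ≤ x) (hb : x ≤ b) (i j : ℕ) :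
    0 ≤ (x - a) ^ i * (b - x) ^ j :=
  mul_nonneg (pow_nonneg (sub_nonneg.2 ha) i) (pow_nonneg (sub_nonneg.2 hb) j)

lemma CritUpper.three_lt {x y : ℝ} (h : CritUpper 3 x y) (hge : 26 ≤ 27 * x + 53 * y)
    (hx2 : x ≤ 2) (hy : 0 ≤ y) : 117 / 5000 + 7 / 8 * x < y := by
  by_contra! hle
  have hx0 : 843 / 2500 ≤ x := by linarith
  have hline := h.mono_right (by linarith) hx2 (by push_cast; linarith) hy hle
  unfold CritUpper at hline
  push_cast at hline
  have hfactor : 0 ≤ (1 - x / 3) * (1 + (x - (117 / 5000 + 7 / 8 * x)) / 3) :=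
    mul_nonneg (by linarith) (by linarith)
  have hsq := pow_le_pow_left₀ (by positivity) hline 2
  rw [mul_pow, pow_right_comm, Real.sq_sqrt hfactor] at hsq
  have B := sub_pow_mul_sub_pow_nonneg hx0 hx2
  linarith [B 0 8, B 1 7, B 2 6, B 3 5, B 4 4, B 5 3, B 6 2, B 7 1, B 8 0]

lemma CritLower.three_lt {x y : ℝ} (h : CritLower 3 x y) (hx : 0 ≤ x)
    (hge : 26 ≤ 27 * x + 53 * y) (hy1 : y ≤ 1) : y < 117 / 5000 + 7 / 8 * x := by
  by_contra! hle
  have hy0 : 1593 / 5000 ≤ y := by linarith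
  have hline := h.mono_left (z := 8 / 7 * (y - 117 / 5000)) hx (by push_cast; linarith)
    (by linarith) hy1 (by push_cast; linarith) (by linarith)
  unfold CritLower at hline
  push_cast at hline
  have B := sub_pow_mul_sub_pow_nonneg hy0 hy1
  linarith [B 0 4, B 1 3, B 2 2, B 3 1, B 4 0]

lemma one_add_div_pow_le {m n : ℕ} (hm : 0 < m) (hmn : m ≤ n) {a : ℝ} (ha : -m ≤ a) :
    (1 + a / m) ^ m ≤ (1 + a / n) ^ n := by
  have hm' : (0 : ℝ) < m := by exact_mod_cast hm
  have hn' : (0 : ℝ) < n := by exact_mod_cast hm.trans_le hmn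
  have hmn' : (m : ℝ) ≤ n := by exact_mod_cast hmn
  have ha' : -1 ≤ a / m := by rw [le_div_iff₀ hm']; linarith
  have h0 : 0 ≤ 1 + a / m := by linarith
  calc (1 + a / m) ^ m = ((1 + a / m) ^ ((m : ℝ) / n)) ^ n := by
        rw [← Real.rpow_mul_natCast h0, div_mul_cancel₀ _ hn'.ne', Real.rpow_natCast]
    _ ≤ (1 + m / n * (a / m)) ^ n := by
        gcongr
        exact rpow_one_add_le_one_add_mul_self ha' (by positivity) ((div_le_one hn').2 hmn')
    _ = (1 + a / n) ^ n := by rw [div_mul_div_cancel₀' hm'.ne']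

lemma one_add_sq_le_exp_mul {X Y : ℝ} (hY : 0 ≤ Y) (hY' : Y ≤ 257 / 1000) (hYX : Y ≤ X)
    (hXY : X ≤ 23 / 20 * Y) : (1 + Y) ^ 2 ≤ Real.exp (3 * Y) * ((1 - X) * (1 + (X - Y))) := by
  have hexp := Real.sum_le_exp_of_nonneg (x := 3 * Y) (by positivity) 6
  norm_num [Finset.sum_range_succ, Nat.factorial] at hexp
  have hprod : 1 - Y - 69 / 400 * Y ^ 2 ≤ (1 - X) * (1 + (X - Y)) := by
    nlinarith [mul_nonneg (sub_nonneg.2 hXY) (sub_nonneg.2 hYX), mul_nonneg (sub_nonneg.2 hXY) hY]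
  have hpos : 0 ≤ 1 - Y - 69 / 400 * Y ^ 2 := by nlinarith
  refine le_trans ?_ (mul_le_mul hexp hprod hpos (Real.exp_pos _).le)
  have B := sub_pow_mul_sub_pow_nonneg hY hY'
  nlinarith [B 3 1, B 4 1, B 5 1, B 2 1, B 2 0, B 6 0, B 7 0]

lemma CritUpper.le_mul_exp {d : ℕ} {x y : ℝ} (hd : 4 ≤ d) (h : CritUpper d x y) (hy : 0 ≤ y)
    (hy' : y ≤ 257 / 250) (hyx : y ≤ x) (hxy : x ≤ 23 / 20 * y) :
    2 * (1 + x) ≤ (2 - x) * Real.exp (3 / 2 * y) := by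
  have hd4 : (4 : ℝ) ≤ d := by exact_mod_cast hd
  have hd0 : (0 : ℝ) < d := by linarith
  have hYX : y / d ≤ x / d := by gcongr
  have hXY : x / d ≤ 23 / 20 * (y / d) := by rw [← mul_div_assoc]; gcongr
  have hY' : y / d ≤ 257 / 1000 := by rw [div_le_iff₀ hd0]; linarith
  have hpos : 0 < (1 - x / d) * (1 + (x / d - y / d)) := mul_pos (by linarith) (by linarith)
  have hroot : 1 + y / d ≤ Real.exp (3 / 2 * (y / d)) * √((1 - x / d) * (1 + (x / d - y / d))) := by
    refine le_of_sq_le_sq ?_ (by positivity)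
    have hexp : ((2 : ℕ) : ℝ) * (3 / 2 * (y / d)) = 3 * (y / d) := by push_cast; ring
    rw [mul_pow, Real.sq_sqrt hpos.le, ← Real.exp_nat_mul, hexp]
    exact one_add_sq_le_exp_mul (div_nonneg hy hd0.le) hY' hYX hXY
  unfold CritUpper at h
  rw [sub_div] at h
  refine le_of_mul_le_mul_right ?_ (pow_pos (Real.sqrt_pos.2 hpos) d)
  calc 2 * (1 + x) * √((1 - x / d) * (1 + (x / d - y / d))) ^ d
      ≤ (2 - x) * (1 + y / d) ^ d := h
    _ ≤ (2 - x) * (Real.exp (3 / 2 * (y / d)) * √((1 - x / d) * (1 + (x / d - y / d)))) ^ d := by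
        have : 0 ≤ 2 - x := by linarith
        gcongr
    _ = (2 - x) * Real.exp (3 / 2 * y) * √((1 - x / d) * (1 + (x / d - y / d))) ^ d := by
        have hexp : (d : ℝ) * (3 / 2 * (y / d)) = 3 / 2 * y := by field_simp
        rw [mul_pow, ← Real.exp_nat_mul, hexp, mul_assoc]

lemma mul_exp_line_lt {x : ℝ} (hx0 : 339 / 1000 ≤ x) (hx1 : x ≤ 23 / 20) :
    (2 - x) * Real.exp (3 / 2 * (21 / 1000 + 7 / 8 * x)) < 2 * (1 + x) := by
  have hx4 : 0 < 4 + x := by linarith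
  -- `w = 3 * x / (4 + x)` solves `(1 + w) / (1 - w) = 2 * (1 + x) / (2 - x)`; the series of
  -- `log ((1 + w) / (1 - w))` then bounds the logarithm from below.
  have hw1 : 3 * x / (4 + x) < 1 := by rw [div_lt_one hx4]; linarith
  have hratio : (1 + 3 * x / (4 + x)) / (1 - 3 * x / (4 + x)) = 2 * (1 + x) / (2 - x) := by
    have : 4 + x - 3 * x ≠ 0 := by linarith
    have : 2 - x ≠ 0 := by linarith
    field_simp
    ring
  have hlog := Real.sum_range_le_log_div (x := 3 * x / (4 + x)) (by positivity) hw1 3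
  rw [hratio] at hlog
  norm_num [Finset.sum_range_succ] at hlog
  have hpoly : 3 / 4 * (21 / 1000 + 7 / 8 * x) <
      3 * x / (4 + x) + (3 * x / (4 + x)) ^ 3 / 3 + (3 * x / (4 + x)) ^ 5 / 5 := by
    have B := sub_pow_mul_sub_pow_nonneg hx0 hx1
    refine lt_of_mul_lt_mul_right ?_ (pow_nonneg hx4.le 5)
    calc 3 / 4 * (21 / 1000 + 7 / 8 * x) * (4 + x) ^ 5
        < 3 * x * (4 + x) ^ 4 + 9 * x ^ 3 * (4 + x) ^ 2 + 243 / 5 * x ^ 5 := by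
          linarith [B 0 6, B 1 5, B 2 4, B 3 3, B 4 2, B 5 1, B 6 0]
      _ = (3 * x / (4 + x) + (3 * x / (4 + x)) ^ 3 / 3 + (3 * x / (4 + x)) ^ 5 / 5) *
          (4 + x) ^ 5 := by
          field_simp
          ring
  have hexp : Real.exp (3 / 2 * (21 / 1000 + 7 / 8 * x)) < 2 * (1 + x) / (2 - x) := by
    rw [← Real.lt_log_iff_exp_lt (div_pos (by linarith) (by linarith))]
    linarith
  rwa [mul_comm, ← lt_div_iff₀ (by linarith)]

lemma sq_mul_le_sqrt_pow {d : ℕ} (hd : 4 ≤ d) {a b : ℝ} (ha : -4 ≤ a) (hb : -4 ≤ b) :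
    ((1 + a / 4) * (1 + b / 4)) ^ 2 ≤ √((1 + a / d) * (1 + b / d)) ^ d := by
  have hd4 : (4 : ℝ) ≤ d := by exact_mod_cast hd
  have factor_nonneg {a : ℝ} (ha : -4 ≤ a) : 0 ≤ 1 + a / d := by
    have : -1 ≤ a / d := by rw [le_div_iff₀ (by linarith)]; linarith
    linarith
  have hA := factor_nonneg ha
  have hB := factor_nonneg hb
  have hpowA := one_add_div_pow_le (m := 4) (by norm_num) hd (by exact_mod_cast ha)
  have hpowB := one_add_div_pow_le (m := 4) (by norm_num) hd (by exact_mod_cast hb)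
  push_cast at hpowA hpowB
  refine le_of_sq_le_sq ?_ (by positivity)
  calc (((1 + a / 4) * (1 + b / 4)) ^ 2) ^ 2 = (1 + a / 4) ^ 4 * (1 + b / 4) ^ 4 := by ring
    _ ≤ (1 + a / d) ^ d * (1 + b / d) ^ d := by gcongr
    _ = (√((1 + a / d) * (1 + b / d)) ^ d) ^ 2 := by
      rw [pow_right_comm √_, Real.sq_sqrt (mul_nonneg hA hB), mul_pow]

lemma CritUpper.left_lt_of_four_le {d : ℕ} {x y : ℝ} (hd : 4 ≤ d) (h : CritUpper d x y)
    (hx : x < 2) (hy0 : 0 ≤ y) (hy1 : y ≤ 1) : x < 23 / 20 := by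
  by_contra! hx0
  have hd4 : (4 : ℝ) ≤ d := by exact_mod_cast hd
  have hone := h.mono_right (by linarith) hx.le (by linarith) hy0 hy1
  have hexp : (1 + 1 / (d : ℝ)) ^ d ≤ 2.7182818286 := by
    rw [one_div]
    exact Real.one_add_inv_pow_le_exp.trans Real.exp_one_lt_d9.le
  have hsqrt := sq_mul_le_sqrt_pow hd (a := -x) (b := x - 1) (by linarith) (by linarith)
  rw [neg_div, neg_div, ← sub_eq_add_neg, ← sub_eq_add_neg] at hsqrt
  unfold CritUpper at hone
  have : 0 ≤ 2 - x := by linarith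
  have hlt : (2 - x) * 2.7182818286 < 2 * (1 + x) * ((1 - x / 4) * (1 + (x - 1) / 4)) ^ 2 := by
    have B := sub_pow_mul_sub_pow_nonneg hx0 hx.le
    linarith [B 0 5, B 1 4, B 2 3, B 3 2, B 4 1, B 5 0]
  refine hlt.not_ge ?_
  calc 2 * (1 + x) * ((1 - x / 4) * (1 + (x - 1) / 4)) ^ 2
      ≤ 2 * (1 + x) * √((1 - x / d) * (1 + (x - 1) / d)) ^ d := by gcongr
    _ ≤ (2 - x) * (1 + 1 / d) ^ d := hone
    _ ≤ (2 - x) * 2.7182818286 := by gcongr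

lemma CritUpper.lt_of_four_le {d : ℕ} {x y : ℝ} (hd : 4 ≤ d) (h : CritUpper d x y)
    (hge : 26 ≤ 27 * x + 53 * y) (hx2 : x < 2) (hy0 : 0 ≤ y) (hy1 : y ≤ 1) :
    21 / 1000 + 7 / 8 * x < y := by
  by_contra! hle
  have hx0 : 339 / 1000 ≤ x := by linarith
  have hd4 : (4 : ℝ) ≤ d := by exact_mod_cast hd
  have hx1 := (h.left_lt_of_four_le hd hx2 hy0 hy1).le
  have hline := h.mono_right (by linarith) hx2.le (by linarith) hy0 hle
  exact (mul_exp_line_lt hx0 hx1).not_ge <|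
    hline.le_mul_exp hd (by linarith) (by linarith) (by linarith) (by linarith)

lemma convexOn_log_sub_log {a b : ℝ} (ha : a < 1) (hab : |b| ≤ a) :
    ConvexOn ℝ (Set.Icc 0 1) fun p : ℝ => Real.log (1 + p * b) - Real.log (1 - p * a) := by
  obtain ⟨hb1, hb2⟩ := abs_le.1 hab
  have hB {p : ℝ} (hp : p ∈ Set.Icc 0 1) : 0 < 1 + p * b := by nlinarith [hp.1, hp.2]
  have hA {p : ℝ} (hp : p ∈ Set.Icc 0 1) : 0 < 1 - p * a := by nlinarith [hp.1, hp.2]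
  have hderivB (p : ℝ) : HasDerivAt (fun p => 1 + p * b) b p := by
    simpa using ((hasDerivAt_id p).mul_const b).const_add 1
  have hderivA (p : ℝ) : HasDerivAt (fun p => 1 - p * a) (-a) p := by
    simpa using ((hasDerivAt_id p).mul_const a).const_sub 1
  have hderiv {p : ℝ} (hp : p ∈ Set.Icc 0 1) :=
    ((hderivB p).log (hB hp).ne').sub ((hderivA p).log (hA hp).ne')
  have hderiv₂ {p : ℝ} (hp : p ∈ Set.Icc 0 1) :=
    ((hasDerivAt_const p b).div (hderivB p) (hB hp).ne').sub
      ((hasDerivAt_const p (-a)).div (hderivA p) (hA hp).ne')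
  refine convexOn_of_hasDerivWithinAt2_nonneg (convex_Icc 0 1)
    (fun p hp => (hderiv hp).continuousAt.continuousWithinAt)
    (fun p hp => (hderiv (interior_subset hp)).hasDerivWithinAt)
    (fun p hp => (hderiv₂ (interior_subset hp)).hasDerivWithinAt) fun p hp => ?_
  have hp' := interior_subset hp
  have hle : |b / (1 + p * b)| ≤ a / (1 - p * a) := by
    rw [abs_div, abs_of_pos (hB hp'), div_le_div_iff₀ (hB hp') (hA hp')]
    nlinarith [neg_abs_le b, mul_nonneg hp'.1 ((abs_nonneg b).trans hab)]
  have hsq := sq_le_sq' (abs_le.1 hle).1 (abs_le.1 hle).2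
  rw [div_pow, div_pow] at hsq
  ring_nf at hsq ⊢
  linarith

lemma one_add_div_pow_mul_le {m n : ℕ} (hm : 0 < m) (hmn : m ≤ n) {a b : ℝ} (ha : a < m)
    (hab : |b| ≤ a) : (1 + b / n) ^ n * (1 - a / m) ^ m ≤ (1 + b / m) ^ m * (1 - a / n) ^ n := by
  have hm' : (0 : ℝ) < m := by exact_mod_cast hm
  have hmn' : (m : ℝ) ≤ n := by exact_mod_cast hmn
  have hn' : (0 : ℝ) < n := hm'.trans_le hmn'
  have hb : -a ≤ b := (abs_le.1 hab).1
  have hchord := (convexOn_log_sub_log (a := a / m) (b := b / m) ((div_lt_one hm').2 ha)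
    (by rw [abs_div, abs_of_pos hm']; gcongr)).2 (Set.left_mem_Icc.2 zero_le_one)
    (Set.right_mem_Icc.2 zero_le_one) (sub_nonneg.2 ((div_le_one hn').2 hmn'))
    (by positivity : (0 : ℝ) ≤ m / n) (by ring)
  simp only [smul_eq_mul, mul_zero, mul_one, zero_add, zero_mul, add_zero, sub_zero, Real.log_one,
    one_mul, div_mul_div_cancel₀' hm'.ne'] at hchord
  have hscaled := mul_le_mul_of_nonneg_left hchord hn'.le
  rw [← mul_assoc, mul_div_cancel₀ _ hn'.ne'] at hscaled
  have pos_add {k : ℕ} (hk : (0 : ℝ) < k) (hmk : (m : ℝ) ≤ k) : 0 < 1 + b / k := by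
    have : -1 < b / k := by rw [lt_div_iff₀ hk]; linarith
    linarith
  have pos_sub {k : ℕ} (hk : (0 : ℝ) < k) (hmk : (m : ℝ) ≤ k) : 0 < 1 - a / k :=
    sub_pos.2 ((div_lt_one hk).2 (by linarith))
  have hBn := pow_pos (pos_add hn' hmn') n
  have hBm := pow_pos (pos_add hm' le_rfl) m
  have hAn := pow_pos (pos_sub hn' hmn') n
  have hAm := pow_pos (pos_sub hm' le_rfl) m
  rw [← Real.log_le_log_iff (mul_pos hBn hAm) (mul_pos hBm hAn), Real.log_mul hBn.ne' hAm.ne',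
    Real.log_mul hBm.ne' hAn.ne', Real.log_pow, Real.log_pow, Real.log_pow, Real.log_pow]
  linarith

lemma CritLower.of_le {m n : ℕ} {x y : ℝ} (hm : 0 < m) (hmn : m ≤ n) (hxm : x < m) (hy0 : 0 ≤ y)
    (hyx : y ≤ x) (hy1 : y ≤ 1) (h : CritLower n x y) : CritLower m x y := by
  have : 0 ≤ 1 - y := sub_nonneg.2 hy1
  have hn' : (0 : ℝ) < n := by exact_mod_cast hm.trans_le hmn
  have hm' : (0 : ℝ) < m := by exact_mod_cast hm
  have hmn' : (m : ℝ) ≤ n := by exact_mod_cast hmn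
  have hX : 0 ≤ 1 - x / m := sub_nonneg.2 ((div_le_one hm').2 hxm.le)
  have hXn : 0 < 1 - x / n := sub_pos.2 ((div_lt_one hn').2 (hxm.trans_le hmn'))
  have hY := one_add_div_pow_mul_le hm hmn hxm (b := y) (by rwa [abs_of_nonneg hy0])
  have hZ := one_add_div_pow_mul_le hm hmn hxm (b := x - y)
    (by rw [abs_of_nonneg (sub_nonneg.2 hyx)]; linarith)
  unfold CritLower at *
  refine le_of_mul_le_mul_right ?_ (pow_pos hXn n)
  calc (2 + y) * (1 - x / m) ^ m * (1 - x / n) ^ n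
      = (2 + y) * (1 - x / n) ^ n * (1 - x / m) ^ m := by ring
    _ ≤ (1 - y) * ((1 + y / n) ^ n + (1 + (x - y) / n) ^ n) * (1 - x / m) ^ m := by gcongr
    _ = (1 - y) * ((1 + y / n) ^ n * (1 - x / m) ^ m +
          (1 + (x - y) / n) ^ n * (1 - x / m) ^ m) := by ring
    _ ≤ (1 - y) * ((1 + y / m) ^ m * (1 - x / n) ^ n +
          (1 + (x - y) / m) ^ m * (1 - x / n) ^ n) := by gcongr
    _ = (1 - y) * ((1 + y / m) ^ m + (1 + (x - y) / m) ^ m) * (1 - x / n) ^ n := by ring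

lemma CritLower.lt_of_four_le {d : ℕ} {x y : ℝ} (hd : 4 ≤ d) (h : CritLower d x y) (hx : 0 ≤ x)
    (hge : 26 ≤ 27 * x + 53 * y) (hy1 : y ≤ 1) : y < 21 / 1000 + 7 / 8 * x := by
  by_contra! hle
  have hy0 : 3177 / 10000 ≤ y := by linarith
  have hd4 : (4 : ℝ) ≤ d := by exact_mod_cast hd
  have hline := (h.mono_left (z := 8 / 7 * (y - 21 / 1000)) hx (by linarith) (by linarith) hy1
    (by linarith) (by linarith)).of_le (by norm_num) hd (by push_cast; linarith) (by linarith)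
    (by linarith) hy1
  unfold CritLower at hline
  push_cast at hline
  have B := sub_pow_mul_sub_pow_nonneg hy0 hy1
  linarith [B 0 5, B 1 4, B 2 3, B 3 2, B 4 1, B 5 0]

theorem IsCritBox.lt_of_three_le {d : ℕ} {x y : ℝ} (hd : 3 ≤ d) (h : IsCritBox d x y) :
    27 * x + 53 * y < 26 := by
  by_contra! hge
  have hx2 := h.left_lt
  have hy1 := h.right_le
  have hyx := h.right_le_left
  have hxy := h.left_le
  rcases hd.eq_or_lt with rfl | hd4
  · linarith [h.upper.three_lt hge hx2.le (by linarith),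
      h.lower.three_lt (by linarith) hge hy1]
  · linarith [h.upper.lt_of_four_le hd4 hge hx2 (by linarith) hy1,
      h.lower.lt_of_four_le hd4 (by linarith) hge hy1]

end LargeBranching

section EventualBounds

lemma eventually_ulSeq_two {β : ℝ} (hβ0 : 0 < β) (hβ1 : β ≤ 1) :
    ∀ᶠ n in atTop, 459 / 2000 ≤ (ulSeq 2 β n).2 ∧ (ulSeq 2 β n).1 ≤ 1107 / 2500 := by
  obtain ⟨x, y, hlim, hbox⟩ := exists_isCritBox le_rfl hβ0 hβ1 (by norm_num; exact hβ0.le)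
  obtain ⟨hy, hx⟩ := hbox.two_bounds
  have hl : 459 / 2000 < (1 - y) / 3 := by nlinarith
  have hu : (1 + x) / 3 < 1107 / 2500 := by linarith
  filter_upwards [hlim.snd_nhds.eventually_const_lt hl, hlim.fst_nhds.eventually_lt_const hu]
    with n hln hun
  exact ⟨hln.le, hun.le⟩

lemma one_sub_three_div_pos {d : ℕ} (hd : 3 ≤ d) : 0 < 1 - 3 / ((d : ℝ) + 1) := by
  have hd3 : (3 : ℝ) ≤ d := by exact_mod_cast hd
  exact sub_pos.2 ((div_lt_one (by linarith)).2 (by linarith))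

lemma eventually_ulSeq_ratio_le {d : ℕ} {β : ℝ} (hd : 3 ≤ d) (hβ : 1 - 3 / ((d : ℝ) + 1) ≤ β)
    (hβ1 : β ≤ 1) : ∀ᶠ n in atTop, (ulSeq d β n).1 / (ulSeq d β n).2 ≤ 53 / 27 := by
  obtain ⟨x, y, hlim, hbox⟩ := exists_isCritBox (by omega) (hβ.trans_lt' (one_sub_three_div_pos hd))
    hβ1 hβ
  have hxy := hbox.lt_of_three_le hd
  have hl : 0 < (1 - y) / 3 := by linarith [hbox.left_le, hbox.right_le_left]
  have hratio : (1 + x) / 3 / ((1 - y) / 3) < 53 / 27 := by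
    rw [div_lt_div_iff₀ hl (by norm_num)]
    linarith
  exact ((hlim.fst_nhds.div hlim.snd_nhds hl.ne').eventually_lt_const hratio).mono fun _ => le_of_lt

end EventualBounds

/-- Bounds from the one-step recursion, for `q = 3` and an arbitrary colour `c`.
For `d = 2` and `β ∈ (0,1)`, the conditional root marginal eventually lies in
`[459/2000, 1107/2500]` for all boundary configurations.  For `d ≥ 3` and
`β ∈ [1 - 3/(d+1), 1)`, there are sequences `L_n ≤ U_n` bounding the conditional
root marginal for all boundary configurations, with `U_n / L_n ≤ 53/27`. -/
theorem potts_one_step_bounds (c : Fin 3) :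
    (∀ β : ℝ, 0 < β → β < 1 →
      ∃ n₀ : ℕ, ∀ n ≥ n₀, ∀ τ : (Fin n → Fin 2) → Fin 3,
        459 / 2000 ≤ condRootProb 3 2 n β τ c ∧
        condRootProb 3 2 n β τ c ≤ 1107 / 2500) ∧
    (∀ d : ℕ, 3 ≤ d → ∀ β : ℝ, 1 - 3 / ((d : ℝ) + 1) ≤ β → β < 1 →
      ∃ L U : ℕ → ℝ, ∃ n₀ : ℕ, ∀ n ≥ n₀,
        (∀ τ : (Fin n → Fin d) → Fin 3,
          L n ≤ condRootProb 3 d n β τ c ∧ condRootProb 3 d n β τ c ≤ U n) ∧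
        U n / L n ≤ 53 / 27) := by
  refine ⟨fun β hβ0 hβ1 => ?_, fun d hd β hβ hβ1 => ?_⟩
  · obtain ⟨n₀, bounds⟩ := eventually_atTop.1 (eventually_ulSeq_two hβ0 hβ1.le)
    refine ⟨n₀, fun n hn τ => ?_⟩
    have hmem := (condRootProb_mem_boundedSimplex hβ0 hβ1.le τ).2 c
    exact ⟨(bounds n hn).1.trans hmem.1, hmem.2.trans (bounds n hn).2⟩
  · obtain ⟨n₀, ratio⟩ := eventually_atTop.1 (eventually_ulSeq_ratio_le hd hβ hβ1.le)
    refine ⟨fun n => (ulSeq d β n).2, fun n => (ulSeq d β n).1, n₀, fun n hn =>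
      ⟨fun τ => ?_, ratio n hn⟩⟩
    have hβ0 : 0 < β := hβ.trans_lt' (one_sub_three_div_pos hd)
    exact (condRootProb_mem_boundedSimplex hβ0 hβ1.le τ).2 c
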